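/- Let k be a field, V a k-vector space of finite dimension 2n, B a nondegenerate alternating bilinear form on V, and σ the adjoint involution of B. If N is a subspace of V with dim_k N = d, then dim_k (Ψ(N)^⊥) = 2n·(2n − d); that is, the orthogonal I^⊥ of a right ideal I of reduced dimension d is a right ideal of reduced dimension 2n − d. -/

import Mathlib

/-- `Ψ(N) = {f ∈ End_R(E) : range f ⊆ N}`, as an `R`-submodule of `End_R(E)`. -/
def psi {R E : Type*} [CommRing R] [AddCommGroup E] [Module R E]
    (N : Submodule R E) : Submodule R (Module.End R E) where
  carrier := {f | LinearMap.range f ≤ N}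
  add_mem' := by
    intro f g hf hg x hx
    obtain ⟨y, rfl⟩ := LinearMap.mem_range.mp hx
    show f y + g y ∈ N
    exact N.add_mem (hf (LinearMap.mem_range_self f y)) (hg (LinearMap.mem_range_self g y))
  zero_mem' := by
    intro x hx
    obtain ⟨y, rfl⟩ := LinearMap.mem_range.mp hx
    exact N.zero_mem
  smul_mem' := by
    intro c f hf x hx
    obtain ⟨y, rfl⟩ := LinearMap.mem_range.mp hx
    show c • f y ∈ N
    exact N.smul_mem c (hf (LinearMap.mem_range_self f y))

/-- `Φ(I)`: the `R`-submodule of `E` generated by the union of the ranges of all `f ∈ I`. -/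
def phi {R E : Type*} [CommRing R] [AddCommGroup E] [Module R E]
    (I : Submodule R (Module.End R E)) : Submodule R E :=
  Submodule.span R (⋃ f ∈ I, (LinearMap.range f : Set E))

/-- A right ideal of `End_R(E)`: an `R`-submodule closed under composition on the right. -/
def IsRightIdeal {R E : Type*} [CommRing R] [AddCommGroup E] [Module R E]
    (I : Submodule R (Module.End R E)) : Prop :=
  ∀ f ∈ I, ∀ g : Module.End R E, f * g ∈ I

/-- A submodule `N` of a module `M` is a direct summand. -/
def IsSummand {R M : Type*} [CommRing R] [AddCommGroup M] [Module R M]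
    (N : Submodule R M) : Prop :=
  ∃ N' : Submodule R M, N ⊓ N' = ⊥ ∧ N ⊔ N' = ⊤

/-- A right ideal `I` of `End_R(E)` is a direct summand of `End_R(E)` as a right module
over itself: there is a right ideal `J` with `I ∩ J = 0` and `I + J = End_R(E)`. -/
def IsIdealSummand {R E : Type*} [CommRing R] [AddCommGroup E] [Module R E]
    (I : Submodule R (Module.End R E)) : Prop :=
  ∃ J : Submodule R (Module.End R E), IsRightIdeal J ∧ I ⊓ J = ⊥ ∧ I ⊔ J = ⊤

/-- For a bilinear form `B` on `V` and a subspace `N`,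
`N^⊥ = {v ∈ V : B(n, v) = 0 for all n ∈ N}`. -/
def subPerp {k V : Type*} [CommRing k] [AddCommGroup V] [Module k V]
    (B : V →ₗ[k] V →ₗ[k] k) (N : Submodule k V) : Submodule k V where
  carrier := {v | ∀ n ∈ N, B n v = 0}
  add_mem' := by
    intro x y hx hy n hn
    simp [map_add, hx n hn, hy n hn]
  zero_mem' := by
    intro n hn
    simp
  smul_mem' := by
    intro c x hx n hn
    simp [hx n hn]

theorem mem_psi {R E : Type*} [CommRing R] [AddCommGroup E] [Module R E]
    {N : Submodule R E} {f : Module.End R E} : f ∈ psi N ↔ ∀ v, f v ∈ N :=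
  ⟨fun h v => h (LinearMap.mem_range_self f v), fun h => by rintro _ ⟨v, rfl⟩; exact h v⟩

theorem isRightIdeal_psi {R E : Type*} [CommRing R] [AddCommGroup E] [Module R E]
    (N : Submodule R E) : IsRightIdeal (psi N) :=
  fun _ hf g => mem_psi.mpr fun v => mem_psi.mp hf (g v)

/-- `Ψ(N)` is the space of linear maps `E → N`. -/
def psiEquiv {R E : Type*} [CommRing R] [AddCommGroup E] [Module R E]
    (N : Submodule R E) : psi N ≃ₗ[R] (E →ₗ[R] N) where
  toFun f := f.1.codRestrict N (mem_psi.mp f.2)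
  invFun g := ⟨N.subtype ∘ₗ g, mem_psi.mpr fun v => (g v).2⟩
  map_add' _ _ := rfl
  map_smul' _ _ := rfl
  left_inv _ := rfl
  right_inv _ := rfl

theorem finrank_psi {k V : Type*} [Field k] [AddCommGroup V] [Module k V]
    [FiniteDimensional k V] (N : Submodule k V) :
    Module.finrank k (psi N) = Module.finrank k V * Module.finrank k N := by
  rw [(psiEquiv N).finrank_eq, Module.finrank_linearMap]

/-- Over a field, an endomorphism annihilates `Ψ(N)` on the left iff it vanishes on `N`. -/
theorem forall_mem_psi_mul_eq_zero_iff {k V : Type*} [Field k] [AddCommGroup V] [Module k V]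
    (N : Submodule k V) (g : Module.End k V) :
    (∀ y ∈ psi N, g * y = 0) ↔ ∀ w ∈ N, g w = 0 := by
  refine ⟨fun h w hw => ?_, fun h y hy => LinearMap.ext fun v => h _ (mem_psi.mp hy v)⟩
  obtain ⟨p, hp⟩ := N.subtype.exists_leftInverse_of_injective N.ker_subtype
  have hpw : p w = ⟨w, hw⟩ := LinearMap.congr_fun hp ⟨w, hw⟩
  have hgp := LinearMap.congr_fun (h (N.subtype ∘ₗ p) (mem_psi.mpr fun v => (p v).2)) w
  simpa [hpw] using hgp

theorem finrank_subPerp {k V : Type*} [Field k] [AddCommGroup V] [Module k V]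
    [FiniteDimensional k V] (B : V →ₗ[k] V →ₗ[k] k) (hB : B.Nondegenerate)
    (N : Submodule k V) :
    Module.finrank k (subPerp B N) = Module.finrank k V - Module.finrank k N :=
  LinearMap.BilinForm.finrank_orthogonal hB N

/-- Let `V` be a `2n`-dimensional vector space with a nondegenerate alternating bilinear form
`B` with adjoint involution `σ`. If `N` is a subspace of dimension `d`, then
`Ψ(N)^⊥ = {x : σ(x) ∘ y = 0 for all y ∈ Ψ(N)}` is a right ideal of `End_k(V)` of dimension
`2n·(2n − d)`, i.e. the orthogonal of a right ideal of reduced dimension `d` is a right ideal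
of reduced dimension `2n − d`. -/
theorem finrank_perp_psi (k V : Type*) [Field k] [AddCommGroup V] [Module k V]
    [FiniteDimensional k V] (n : ℕ) (hV : Module.finrank k V = 2 * n)
    (B : V →ₗ[k] V →ₗ[k] k)
    (halt : ∀ v : V, B v v = 0)
    (hnd₁ : ∀ u : V, (∀ v : V, B u v = 0) → u = 0)
    (hnd₂ : ∀ v : V, (∀ u : V, B u v = 0) → v = 0)
    (σ : Module.End k V → Module.End k V)
    (hσ : ∀ (f : Module.End k V) (u v : V), B (f u) v = B u (σ f v))
    (N : Submodule k V) (d : ℕ) (hd : Module.finrank k N = d) :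
    ∃ P : Submodule k (Module.End k V),
      (∀ x : Module.End k V, x ∈ P ↔ ∀ y : Module.End k V, y ∈ psi N → σ x * y = 0) ∧
      IsRightIdeal P ∧
      Module.finrank k P = 2 * n * (2 * n - d) := by
  have hrefl : B.IsRefl := LinearMap.IsAlt.isRefl halt
  refine ⟨psi (subPerp B N), fun x => ?_, isRightIdeal_psi _, ?_⟩
  · rw [forall_mem_psi_mul_eq_zero_iff, mem_psi]
    refine ⟨fun h w hw => hnd₂ _ fun u => ?_, fun h u w hw => hrefl _ _ ?_⟩
    · rw [← hσ]
      exact hrefl _ _ (h u w hw)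
    · rw [hσ, h w hw, map_zero]
  · rw [finrank_psi, finrank_subPerp B ⟨hnd₁, hnd₂⟩, hV, hd]
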